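/- arXiv:2009.09113 — 2 statements merged into one kernel-verified Lean document; each statement's English description precedes it below -/
import Mathlib

section
/- Every locally finite Borel graph 𝒢 has a maximal independent set A ⊆ V which is Borel. -/
/-!
The core is **Novikov's separation theorem**: countably many analytic sets with empty intersection
are contained in Borel sets with empty intersection. Code the points of all the sets by one element
of Baire space, each coordinate of which concerns only one of the sets. If the family is not
separable, neither is its restriction to some branch of nested cylinders, but along that branch two
of the sets shrink to distinct points and can be separated by open sets.

Let `P ⊆ X × Y` be Borel with discrete sections. Each `(x, y) ∈ P` has a basic open set `u` for
which `y` is the only point of the section `Pₓ` in `u`. For fixed `u` this condition is only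
coanalytic, but Novikov's theorem refines these countably many conditions to a Borel cover of `P`.
The first projection is injective on each piece, so `P` has Borel projection by Lusin–Souslin.

Hence the neighbourhood `N(S)` of a Borel set `S` is Borel. The independent sets `u \ N(u)`, for `u`
in a countable basis, cover the graph because no vertex is a limit of its neighbours, and adding
them greedily one after the other yields a maximal independent set.
-/

open Function Set TopologicalSpace MeasureTheory

section Separation

variable {ι X : Type*}

theorem bar_induction_cylinder {E : ℕ → Type*} [Nonempty (∀ n, E n)] {P : Set (∀ n, E n) → Prop}
    (bar : ∀ x, ∃ n, P (PiNat.cylinder x n))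
    (step : ∀ x n, (∀ a, P (PiNat.cylinder (update x n a) (n + 1))) → P (PiNat.cylinder x n)) :
    P univ := by
  by_contra hP
  have extend : ∀ x n, ¬ P (PiNat.cylinder x n) →
      ∃ y ∈ PiNat.cylinder x n, ¬ P (PiNat.cylinder y (n + 1)) := fun x n h ↦
    let ⟨a, ha⟩ := not_forall.1 (mt (step x n) h)
    ⟨update x n a, PiNat.update_mem_cylinder x n a, ha⟩
  choose! child child_mem hchild using extend
  let s : ℕ → ∀ n, E n := Nat.rec (Classical.arbitrary _) fun n x ↦ child x n
  have hs : ∀ n, ¬ P (PiNat.cylinder (s n) n) := fun n ↦ by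
    induction n with
    | zero => rwa [PiNat.cylinder_zero]
    | succ n ih => exact hchild _ _ ih
  let branch : ∀ n, E n := fun n ↦ s (n + 1) n
  have s_mem : ∀ n, s n ∈ PiNat.cylinder branch n := fun n i hi ↦ by
    induction n, hi using Nat.le_induction with
    | base => rfl
    | succ n hin ih => exact (child_mem _ _ (hs n) i hin).trans ih
  obtain ⟨n, hn⟩ := bar branch
  exact hs n (PiNat.mem_cylinder_iff_eq.1 (s_mem n) ▸ hn)

variable [MeasurableSpace X]

/-- The sets `A i` are contained in measurable sets with empty intersection: the version for
families of Mathlib's `MeasureTheory.MeasurablySeparable`. -/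
def MeasurablySeparableFamily (A : ι → Set X) : Prop :=
  ∃ B : ι → Set X, (∀ i, MeasurableSet (B i)) ∧ (∀ i, A i ⊆ B i) ∧ ⋂ i, B i = ∅

namespace MeasurablySeparableFamily

theorem mono {A A' : ι → Set X} (h : MeasurablySeparableFamily A') (hA : ∀ i, A i ⊆ A' i) :
    MeasurablySeparableFamily A :=
  let ⟨B, hB, hAB, hB_empty⟩ := h
  ⟨B, hB, fun i ↦ (hA i).trans (hAB i), hB_empty⟩

theorem of_measurablySeparable {A : ι → Set X} (i j : ι) (h : MeasurablySeparable (A i) (A j)) :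
    MeasurablySeparableFamily A := by
  obtain ⟨u, hAu, hdisj, hu⟩ := h
  refine ⟨fun k ↦ (⋂ _ : k = i, u) ∩ ⋂ _ : k = j, uᶜ, fun k ↦ ?_, fun k ↦ ?_, ?_⟩
  · exact (MeasurableSet.iInter fun _ ↦ hu).inter (MeasurableSet.iInter fun _ ↦ hu.compl)
  · refine subset_inter (subset_iInter ?_) (subset_iInter ?_)
    · rintro rfl
      exact hAu
    · rintro rfl
      exact hdisj.subset_compl_right
  · refine eq_empty_of_forall_notMem fun x hx ↦ ?_
    simp only [mem_iInter, mem_inter_iff] at hx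
    exact (hx j).2 rfl ((hx i).1 rfl)

theorem of_subset_iUnion {κ : Type*} [Countable κ] {A : ι → Set X} (p : ι) (C : κ → ι → Set X)
    (hp : A p ⊆ ⋃ j, C j p) (hne : ∀ j, ∀ i ≠ p, A i ⊆ C j i)
    (hC : ∀ j, MeasurablySeparableFamily (C j)) : MeasurablySeparableFamily A := by
  classical
  choose B hB hCB hB_empty using hC
  refine ⟨update (fun i ↦ ⋂ j, B j i) p (⋃ j, B j p), ?_, ?_, ?_⟩
  · exact (forall_update_iff _ fun _ s ↦ MeasurableSet s).2
      ⟨.iUnion fun j ↦ hB j p, fun i _ ↦ .iInter fun j ↦ hB j i⟩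
  · exact (forall_update_iff _ fun i s ↦ A i ⊆ s).2
      ⟨hp.trans (iUnion_mono fun j ↦ hCB j p),
        fun i hi ↦ subset_iInter fun j ↦ (hne j i hi).trans (hCB j i)⟩
  · refine eq_empty_of_forall_notMem fun x hx ↦ ?_
    have hx' := (forall_update_iff _ fun _ s ↦ x ∈ s).1 (mem_iInter.1 hx)
    obtain ⟨j, hj⟩ := mem_iUnion.1 hx'.1
    have : x ∈ ⋂ i, B j i := mem_iInter.2 fun i ↦ by
      by_cases hi : i = p
      · exact hi ▸ hj
      · exact mem_iInter.1 (hx'.2 i hi) j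
    simp [hB_empty j] at this

end MeasurablySeparableFamily

theorem measurablySeparableFamily_image_cylinder_of_update {g : ι → (ℕ → ℕ) → X} {owner : ℕ → ι}
    (hg : ∀ i, DependsOn (g i) (owner ⁻¹' {i})) (x : ℕ → ℕ) (n : ℕ)
    (h : ∀ a, MeasurablySeparableFamily
      fun i ↦ g i '' PiNat.cylinder (update x n a) (n + 1)) :
    MeasurablySeparableFamily fun i ↦ g i '' PiNat.cylinder x n := by
  refine .of_subset_iUnion (owner n) _ ?_ ?_ h
  · rw [← image_iUnion, PiNat.iUnion_cylinder_update x n]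
  · rintro a i hi _ ⟨y, hy, rfl⟩
    refine ⟨update y n a, fun k hk ↦ ?_, hg i fun k hk ↦ update_of_ne ?_ _ _⟩
    · rcases eq_or_ne k n with rfl | hkn
      · simp only [update_self]
      · rw [update_of_ne hkn, update_of_ne hkn]
        exact hy k (by omega)
    · rintro rfl
      exact hi hk.symm

variable [TopologicalSpace X] [T2Space X] [OpensMeasurableSpace X]

theorem exists_measurablySeparable_image_cylinder {f g : (ℕ → ℕ) → X} (hf : Continuous f)
    (hg : Continuous g) {x : ℕ → ℕ} (hne : f x ≠ g x) :
    ∃ n, MeasurablySeparable (f '' PiNat.cylinder x n) (g '' PiNat.cylinder x n) := by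
  obtain ⟨U, V, hU, hV, hxU, hxV, hUV⟩ := t2_separation hne
  obtain ⟨_, ⟨y, n, rfl⟩, hxn, hn⟩ :=
    (PiNat.isTopologicalBasis_cylinders fun _ ↦ ℕ).exists_subset_of_mem_open
      (show x ∈ f ⁻¹' U ∩ g ⁻¹' V from ⟨hxU, hxV⟩) ((hU.preimage hf).inter (hV.preimage hg))
  rw [← PiNat.mem_cylinder_iff_eq.1 hxn] at hn
  exact ⟨n, U, image_subset_iff.2 (hn.trans inter_subset_left),
    hUV.symm.mono_left (image_subset_iff.2 (hn.trans inter_subset_right)), hU.measurableSet⟩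

theorem measurablySeparableFamily_range {g : ι → (ℕ → ℕ) → X} (hg : ∀ i, Continuous (g i))
    {owner : ℕ → ι} (howner : ∀ i, DependsOn (g i) (owner ⁻¹' {i}))
    (hne : ∀ x, ∃ i j, g i x ≠ g j x) : MeasurablySeparableFamily fun i ↦ range (g i) := by
  simp only [← image_univ]
  refine bar_induction_cylinder (P := fun C ↦ MeasurablySeparableFamily fun i ↦ g i '' C)
    (fun x ↦ ?_) (measurablySeparableFamily_image_cylinder_of_update howner)
  obtain ⟨i, j, hij⟩ := hne x
  obtain ⟨n, hn⟩ := exists_measurablySeparable_image_cylinder (hg i) (hg j) hij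
  exact ⟨n, .of_measurablySeparable i j hn⟩

/-- **Novikov's separation theorem** -/
theorem measurablySeparableFamily_of_analyticSet [Countable ι] {A : ι → Set X}
    (hA : ∀ i, AnalyticSet (A i)) (hA_empty : ⋂ i, A i = ∅) : MeasurablySeparableFamily A := by
  rcases isEmpty_or_nonempty ι with _ | _
  · exact ⟨A, isEmptyElim, isEmptyElim, hA_empty⟩
  by_cases hempty : ∃ i, A i = ∅
  · obtain ⟨i, hi⟩ := hempty
    exact .of_measurablySeparable i i ⟨∅, hi.subset, disjoint_empty _, .empty⟩
  have hparam : ∀ i, ∃ f : (ℕ → ℕ) → X, Continuous f ∧ range f = A i := fun i ↦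
    (by simpa only [AnalyticSet] using hA i : A i = ∅ ∨ _).resolve_left fun hi ↦ hempty ⟨i, hi⟩
  choose f hf hfA using hparam
  obtain ⟨e, he⟩ := exists_injective_nat (ι × ℕ)
  let g : ι → (ℕ → ℕ) → X := fun i z ↦ f i fun k ↦ z (e (i, k))
  have hg_cont : ∀ i, Continuous (g i) := fun i ↦
    (hf i).comp (continuous_pi fun k ↦ continuous_apply (e (i, k)))
  have hg_dep : ∀ i, DependsOn (g i) ((Prod.fst ∘ invFun e) ⁻¹' {i}) := fun i x y hxy ↦
    congrArg (f i) (funext fun k ↦ hxy _ (congrArg Prod.fst (leftInverse_invFun he (i, k))))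
  have hg_ne : ∀ z, ∃ i j, g i z ≠ g j z := fun z ↦ by
    by_contra! hconst
    have i₀ := Classical.arbitrary ι
    have : g i₀ z ∈ ⋂ i, A i :=
      mem_iInter.2 fun i ↦ hfA i ▸ ⟨fun k ↦ z (e (i, k)), hconst i i₀⟩
    simp [hA_empty] at this
  refine (measurablySeparableFamily_range hg_cont hg_dep hg_ne).mono fun i ↦ ?_
  rw [← hfA i]
  rintro _ ⟨x, rfl⟩
  exact ⟨fun m ↦ x (invFun e m).2, by simp only [g, leftInverse_invFun he (i, _)]⟩

end Separation

section Projection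

theorem analyticSet_union {X : Type*} [TopologicalSpace X] {s t : Set X} (hs : AnalyticSet s)
    (ht : AnalyticSet t) : AnalyticSet (s ∪ t) := by
  rw [union_eq_iUnion]
  exact .iUnion (Bool.forall_bool.2 ⟨ht, hs⟩)

variable {X Y : Type*} {P : Set (X × Y)}

/-- The points `(x, y)` of `P` such that `u` does not isolate `y` in the section of `P` above `x`,
that is, `u` does not meet this section exactly in `y`. -/
def notIsolatedBy (P : Set (X × Y)) (u : Set Y) : Set (X × Y) :=
  P \ Prod.snd ⁻¹' u ∪ {p ∈ P | ∃ y ∈ u, y ≠ p.2 ∧ (p.1, y) ∈ P}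

theorem injOn_fst_sdiff_notIsolatedBy (P : Set (X × Y)) (u : Set Y) :
    InjOn Prod.fst (P \ notIsolatedBy P u) := by
  rintro ⟨x, y⟩ ⟨hy, hy_iso⟩ ⟨_, z⟩ ⟨hz, hz_iso⟩ rfl
  have hzu : z ∈ u := by
    by_contra hzu
    exact hz_iso (.inl ⟨hz, hzu⟩)
  by_contra hne
  exact hy_iso (.inr ⟨hy, z, hzu, fun hzy ↦ hne (hzy ▸ rfl), hz⟩)

theorem iInter_notIsolatedBy_eq_empty [TopologicalSpace Y] {U : ℕ → Set Y}
    (hU : IsTopologicalBasis (range U)) (hdisc : ∀ x, IsDiscrete {y | (x, y) ∈ P}) :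
    ⋂ n, notIsolatedBy P (U n) = ∅ := by
  refine eq_empty_of_forall_notMem fun ⟨x, y⟩ hp ↦ ?_
  have hy : (x, y) ∈ P := (mem_iInter.1 hp 0).elim And.left And.left
  obtain ⟨v, hv, hv_iso⟩ := isDiscrete_iff_forall_mem_exists_isOpen.1 (hdisc x) y hy
  have hyv : y ∈ v := (hv_iso.symm.subset rfl).1
  obtain ⟨_, ⟨n, rfl⟩, hyn, hnv⟩ := hU.exists_subset_of_mem_open hyv hv
  rcases mem_iInter.1 hp n with ⟨-, hyn'⟩ | ⟨-, z, hzn, hzy, hz⟩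
  · exact hyn' hyn
  · exact hzy (hv_iso.subset ⟨hnv hzn, hz⟩)

variable [MeasurableSpace X] [TopologicalSpace Y] [PolishSpace Y] [MeasurableSpace Y] [BorelSpace Y]

theorem analyticSet_notIsolatedBy [TopologicalSpace X] [PolishSpace X] [BorelSpace X]
    (hP : MeasurableSet P) {u : Set Y} (hu : MeasurableSet u) :
    AnalyticSet (notIsolatedBy P u) := by
  refine analyticSet_union (hP.diff (measurable_snd hu)).analyticSet ?_
  let Q : Set ((X × Y) × Y) := {q | q.1 ∈ P ∧ q.2 ∈ u ∧ q.2 ≠ q.1.2 ∧ (q.1.1, q.2) ∈ P}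
  have hQ : MeasurableSet Q := (measurable_fst hP).inter <| (measurable_snd hu).inter <|
    (measurableSet_eq_fun measurable_snd measurable_fst.snd).compl.inter <|
    (measurable_fst.fst.prodMk measurable_snd) hP
  have hQ_image : Prod.fst '' Q = {p ∈ P | ∃ y ∈ u, y ≠ p.2 ∧ (p.1, y) ∈ P} := by
    ext p
    simp [Q]
  exact hQ_image ▸ hQ.analyticSet_image measurable_fst

variable [StandardBorelSpace X]

theorem exists_measurableSet_injOn_fst_iUnion_eq (hP : MeasurableSet P)
    (hdisc : ∀ x, IsDiscrete {y | (x, y) ∈ P}) :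
    ∃ C : ℕ → Set (X × Y),
      (∀ n, MeasurableSet (C n)) ∧ (∀ n, InjOn Prod.fst (C n)) ∧ ⋃ n, C n = P := by
  let _ := upgradeStandardBorel X
  obtain ⟨U, hU⟩ := exists_seq_basis Y
  obtain ⟨B, hB, hsub, hB_empty⟩ := measurablySeparableFamily_of_analyticSet
    (fun n ↦ analyticSet_notIsolatedBy hP (hU.isOpen (mem_range_self n)).measurableSet)
    (iInter_notIsolatedBy_eq_empty hU hdisc)
  refine ⟨fun n ↦ P \ B n, fun n ↦ hP.diff (hB n), fun n ↦ ?_, ?_⟩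
  · exact (injOn_fst_sdiff_notIsolatedBy P (U n)).mono (sdiff_subset_sdiff_right (hsub n))
  · rw [← sdiff_iInter, hB_empty, sdiff_empty]

theorem measurableSet_fst_image_of_isDiscrete (hP : MeasurableSet P)
    (hdisc : ∀ x, IsDiscrete {y | (x, y) ∈ P}) : MeasurableSet (Prod.fst '' P) := by
  let _ := upgradeStandardBorel X
  obtain ⟨C, hC, hinj, rfl⟩ := exists_measurableSet_injOn_fst_iUnion_eq hP hdisc
  rw [image_iUnion]
  exact .iUnion fun n ↦ (hC n).image_of_measurable_injOn measurable_fst (hinj n)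

end Projection

section Graph

variable {V : Type*} {G : SimpleGraph V}

/-- The neighbourhood of a set of vertices: all vertices with a neighbour in `S`. -/
def neighborhood (G : SimpleGraph V) (S : Set V) : Set V := {x | ∃ y ∈ S, G.Adj x y}

theorem isIndepSet_sdiff_neighborhood (S : Set V) : G.IsIndepSet (S \ neighborhood G S) :=
  fun _ hx y hy _ hadj ↦ hx.2 ⟨y, hy.1, hadj⟩

/-- The independent set built greedily from `W 0, W 1, …`: at each step, the vertices of the next
`W n` without a neighbour chosen before are added. -/
def greedyIndepSet (G : SimpleGraph V) (W : ℕ → Set V) : ℕ → Set V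
  | 0 => ∅
  | n + 1 => greedyIndepSet G W n ∪ W n \ neighborhood G (greedyIndepSet G W n)

theorem monotone_greedyIndepSet (G : SimpleGraph V) (W : ℕ → Set V) :
    Monotone (greedyIndepSet G W) :=
  monotone_nat_of_le_succ fun _ ↦ subset_union_left

theorem isIndepSet_greedyIndepSet {W : ℕ → Set V} (hW : ∀ n, G.IsIndepSet (W n)) :
    ∀ n, G.IsIndepSet (greedyIndepSet G W n)
  | 0 => pairwise_empty _
  | n + 1 => by
    rintro x (hx | hx) y (hy | hy) hxy hadj
    · exact isIndepSet_greedyIndepSet hW n hx hy hxy hadj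
    · exact hy.2 ⟨x, hx, hadj.symm⟩
    · exact hx.2 ⟨y, hy, hadj⟩
    · exact hW n hx.1 hy.1 hxy hadj

theorem isIndepSet_iUnion_greedyIndepSet {W : ℕ → Set V} (hW : ∀ n, G.IsIndepSet (W n)) :
    G.IsIndepSet (⋃ n, greedyIndepSet G W n) :=
  (pairwise_iUnion (monotone_greedyIndepSet G W).directed_le).2 (isIndepSet_greedyIndepSet hW)

theorem exists_adj_of_notMem_iUnion_greedyIndepSet {W : ℕ → Set V} (hcover : ⋃ n, W n = univ)
    {x : V} (hx : x ∉ ⋃ n, greedyIndepSet G W n) : ∃ y ∈ ⋃ n, greedyIndepSet G W n, G.Adj x y := by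
  obtain ⟨n, hn⟩ := iUnion_eq_univ_iff.1 hcover x
  have hx_nbhd : x ∈ neighborhood G (greedyIndepSet G W n) := by
    by_contra hfree
    exact hx (mem_iUnion.2 ⟨n + 1, .inr ⟨hn, hfree⟩⟩)
  obtain ⟨y, hy, hadj⟩ := hx_nbhd
  exact ⟨y, mem_iUnion.2 ⟨n, hy⟩, hadj⟩

theorem iUnion_sdiff_neighborhood_eq_univ [TopologicalSpace V] {U : ℕ → Set V}
    (hU : IsTopologicalBasis (range U)) (hclosure : ∀ x, x ∉ closure (G.neighborSet x)) :
    ⋃ n, U n \ neighborhood G (U n) = univ := by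
  refine iUnion_eq_univ_iff.2 fun x ↦ ?_
  obtain ⟨_, ⟨n, rfl⟩, hxn, hsub⟩ := hU.exists_subset_of_mem_open
    (mem_compl (hclosure x)) isClosed_closure.isOpen_compl
  exact ⟨n, hxn, fun ⟨y, hy, hadj⟩ ↦ hsub hy (subset_closure hadj)⟩

theorem notMem_closure_neighborSet [TopologicalSpace V] {x : V}
    (hdisc : IsDiscrete (insert x (G.neighborSet x))) : x ∉ closure (G.neighborSet x) := by
  intro hx
  obtain ⟨u, hu, hu_iso⟩ :=
    isDiscrete_iff_forall_mem_exists_isOpen.1 hdisc x (mem_insert x _)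
  obtain ⟨y, hyu, hadj⟩ := mem_closure_iff.1 hx u hu (hu_iso.symm.subset rfl).1
  exact G.ne_of_adj hadj (hu_iso.subset ⟨hyu, mem_insert_of_mem x hadj⟩).symm

variable [MeasurableSpace V]

theorem measurableSet_neighborhood [TopologicalSpace V] [PolishSpace V] [BorelSpace V]
    (hdisc : ∀ x, IsDiscrete (G.neighborSet x))
    (hE : MeasurableSet {p : V × V | G.Adj p.1 p.2}) {S : Set V} (hS : MeasurableSet S) :
    MeasurableSet (neighborhood G S) := by
  have himage : Prod.fst '' ({p : V × V | G.Adj p.1 p.2} ∩ Prod.snd ⁻¹' S) = neighborhood G S := by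
    ext x
    simp [neighborhood, and_comm]
  exact himage ▸ measurableSet_fst_image_of_isDiscrete (hE.inter (measurable_snd hS))
    fun x ↦ (hdisc x).mono fun y hy ↦ hy.1

theorem measurableSet_greedyIndepSet {W : ℕ → Set V} (hW : ∀ n, MeasurableSet (W n))
    (hN : ∀ S, MeasurableSet S → MeasurableSet (neighborhood G S)) :
    ∀ n, MeasurableSet (greedyIndepSet G W n)
  | 0 => .empty
  | n + 1 =>
    have ih := measurableSet_greedyIndepSet hW hN n
    ih.union ((hW n).diff (hN _ ih))

theorem exists_measurableSet_isIndepSet_maximal {W : ℕ → Set V} (hW : ∀ n, MeasurableSet (W n))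
    (hindep : ∀ n, G.IsIndepSet (W n)) (hcover : ⋃ n, W n = univ)
    (hN : ∀ S, MeasurableSet S → MeasurableSet (neighborhood G S)) :
    ∃ A, MeasurableSet A ∧ G.IsIndepSet A ∧ ∀ x ∉ A, ∃ y ∈ A, G.Adj x y :=
  ⟨⋃ n, greedyIndepSet G W n, .iUnion (measurableSet_greedyIndepSet hW hN),
    isIndepSet_iUnion_greedyIndepSet hindep,
    fun _ ↦ exists_adj_of_notMem_iUnion_greedyIndepSet hcover⟩

end Graph

theorem stmt_10_general {V : Type*} [TopologicalSpace V] [PolishSpace V] [MeasurableSpace V]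
    [BorelSpace V] (G : SimpleGraph V) (hdisc : ∀ x : V, IsDiscrete (insert x (G.neighborSet x)))
    (hE : MeasurableSet {p : V × V | G.Adj p.1 p.2}) :
    ∃ A : Set V, MeasurableSet A ∧ (∀ x ∈ A, ∀ y ∈ A, ¬ G.Adj x y) ∧
      ∀ x : V, x ∉ A → ∃ y ∈ A, G.Adj x y := by
  obtain ⟨U, hU⟩ := exists_seq_basis V
  have hU_meas : ∀ n, MeasurableSet (U n) := fun n ↦ (hU.isOpen (mem_range_self n)).measurableSet
  have hN : ∀ S, MeasurableSet S → MeasurableSet (neighborhood G S) := fun S ↦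
    measurableSet_neighborhood (fun x ↦ (hdisc x).mono (subset_insert x _)) hE
  have hcover := iUnion_sdiff_neighborhood_eq_univ hU fun x ↦ notMem_closure_neighborSet (hdisc x)
  obtain ⟨A, hA, hindep, hmax⟩ := exists_measurableSet_isIndepSet_maximal
    (fun n ↦ (hU_meas n).diff (hN _ (hU_meas n))) (fun n ↦ isIndepSet_sdiff_neighborhood (U n))
    hcover hN
  exact ⟨A, hA, fun x hx y hy hadj ↦ hindep hx hy (G.ne_of_adj hadj) hadj, hmax⟩

/-- Every locally finite Borel graph has a maximal independent set which is Borel. -/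
theorem stmt_10 {V : Type*} [MeasurableSpace V] [StandardBorelSpace V]
    (G : SimpleGraph V) (hlf : ∀ x : V, (G.neighborSet x).Finite)
    (hE : MeasurableSet {p : V × V | G.Adj p.1 p.2}) :
    ∃ A : Set V, MeasurableSet A ∧ (∀ x ∈ A, ∀ y ∈ A, ¬ G.Adj x y) ∧
      ∀ x : V, x ∉ A → ∃ y ∈ A, G.Adj x y := by
  let _ := upgradeStandardBorel V
  exact stmt_10_general G (fun x ↦ ((hlf x).insert x).isDiscrete) hE
end

section
/- Every locally finite Borel graph 𝒢 = (V, E, 𝓑) has a maximal matching M ⊆ E which is a Borel subset of V². -/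
/-!
A Borel set `E ⊆ X × Y` whose sections are discrete is a countable union of Borel graphs of partial
functions: if `U` runs through a countable base of `Y`, the analytic sets of those `(x, y) ∈ E` for
which `U` does not isolate `y` in the section over `x` have empty intersection, and by Novikov's
separation theorem they can be enlarged to Borel sets with empty intersection. As in the
Feldman–Moore theorem, intersecting these graphs with their inverses and with the rectangles
`U × Uᶜ`, for `U` in a countable separating family, covers the edge set by countably many Borel
matchings. Going through these one after the other, adding each time the edges that meet no earlier
one, gives the maximal matching; the vertices covered so far always form a Borel set because the
projection of a matching to its vertices is injective.
-/

open Function Set TopologicalSpace MeasureTheory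
open scoped SetRel

/-! ### Novikov's separation theorem -/

section Novikov

variable {ι α : Type*}

/-- The conclusion of Novikov's separation theorem for the family `A`: enlarging every `A i` to a
suitable measurable set makes the intersection empty. -/
def NovikovSeparable [MeasurableSpace α] (A : ι → Set α) : Prop :=
  ∃ B : ι → Set α, (∀ i, MeasurableSet (B i)) ∧ (∀ i, A i ⊆ B i) ∧ ⋂ i, B i = ∅

section MeasurableSpace

variable [MeasurableSpace α] {A : ι → Set α}

lemma NovikovSeparable.of_disjoint {i j : ι} {U W : Set α} (hij : i ≠ j) (hU : MeasurableSet U)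
    (hW : MeasurableSet W) (hUW : Disjoint U W) (hi : A i ⊆ U) (hj : A j ⊆ W) :
    NovikovSeparable A := by
  classical
  let B : ι → Set α := update (update (fun _ => univ) j W) i U
  have hBi : B i = U := update_self ..
  have hBj : B j = W := by simp [B, hij.symm]
  have hB : ∀ l, l ≠ i → l ≠ j → B l = univ := fun l hli hlj => by simp [B, hli, hlj]
  refine ⟨B, fun l => ?_, fun l => ?_, subset_eq_empty ?_ hUW.inter_eq⟩
  · by_cases hli : l = i <;> by_cases hlj : l = j <;> simp_all
  · by_cases hli : l = i <;> by_cases hlj : l = j <;> simp_all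
  · exact subset_inter (hBi ▸ iInter_subset B i) (hBj ▸ iInter_subset B j)

lemma NovikovSeparable.of_eq_empty {k : ι} (hk : A k = ∅) : NovikovSeparable A := by
  classical
  refine ⟨update (fun _ => univ) k ∅, fun i => ?_, fun i => ?_,
    subset_eq_empty (iInter_subset _ k) (update_self ..)⟩
  · by_cases hik : i = k <;> simp_all
  · by_cases hik : i = k <;> simp_all

lemma NovikovSeparable.of_subset_iUnion {κ : Type*} [Countable κ] {B : κ → ι → Set α} {k : ι}
    (hk : A k ⊆ ⋃ m, B m k) (hne : ∀ i ≠ k, ∀ m, A i ⊆ B m i)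
    (hB : ∀ m, NovikovSeparable (B m)) : NovikovSeparable A := by
  classical
  choose D hDmeas hBD hDempty using hB
  let D' : ι → Set α := fun i => if i = k then ⋃ m, D m k else ⋂ m, D m i
  have hD'k : D' k = ⋃ m, D m k := if_pos rfl
  have hD'ne : ∀ i ≠ k, D' i = ⋂ m, D m i := fun i hi => if_neg hi
  refine ⟨D', fun i => ?_, fun i => ?_, eq_empty_of_forall_notMem fun x hx => ?_⟩
  · rcases eq_or_ne i k with rfl | hi
    · exact hD'k ▸ .iUnion fun m => hDmeas m i
    · exact hD'ne i hi ▸ .iInter fun m => hDmeas m i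
  · rcases eq_or_ne i k with rfl | hi
    · exact hD'k ▸ hk.trans (iUnion_mono fun m => hBD m i)
    · exact hD'ne i hi ▸ subset_iInter fun m => (hne i hi m).trans (hBD m i)
  · rw [mem_iInter] at hx
    obtain ⟨m, hm⟩ := mem_iUnion.1 (hD'k ▸ hx k)
    refine notMem_empty x (hDempty m ▸ mem_iInter.2 fun i => ?_)
    rcases eq_or_ne i k with rfl | hi
    · exact hm
    · exact mem_iInter.1 (hD'ne i hi ▸ hx i) m

end MeasurableSpace

lemma exists_forall_cylinder {E : ℕ → Type*} {P : Set (∀ n, E n) → Prop} {z₀ : ∀ n, E n}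
    (hzero : P (PiNat.cylinder z₀ 0))
    (hsucc : ∀ z n, P (PiNat.cylinder z n) → ∃ m, P (PiNat.cylinder (update z n m) (n + 1))) :
    ∃ z, ∀ n, P (PiNat.cylinder z n) := by
  have : ∀ n, Nonempty (E n) := fun n => ⟨z₀ n⟩
  choose! m hm using hsucc
  let S : ℕ → ∀ n, E n := fun n => Nat.rec z₀ (fun n z => update z n (m z n)) n
  have hPS : ∀ n, P (PiNat.cylinder (S n) n) := fun n =>
    Nat.rec hzero (fun n ih => hm (S n) n ih) n
  have hS_succ : ∀ n, S (n + 1) = update (S n) n (m (S n) n) := fun _ => rfl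
  have hS : ∀ n, ∀ i < n, S n i = S (i + 1) i := by
    intro n i hi
    induction n, hi using Nat.le_induction with
    | base => rfl
    | succ n hn ih => rw [hS_succ, update_of_ne (by omega), ih]
  refine ⟨fun i => S (i + 1) i, fun n => ?_⟩
  rw [← PiNat.mem_cylinder_iff_eq.1 (PiNat.mem_cylinder_iff.2 (hS n))]
  exact hPS n

lemma exists_forall_ge_image_cylinder_subset {E : ℕ → Type*} [∀ n, TopologicalSpace (E n)]
    [∀ n, DiscreteTopology (E n)] [TopologicalSpace α] {g : (∀ n, E n) → α} (hg : Continuous g)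
    {z : ∀ n, E n} {U : Set α} (hU : IsOpen U) (hz : g z ∈ U) :
    ∃ N, ∀ n ≥ N, g '' PiNat.cylinder z n ⊆ U := by
  obtain ⟨_, ⟨y, N, rfl⟩, hzy, hyU⟩ :=
    (PiNat.isTopologicalBasis_cylinders E).exists_subset_of_mem_open
      (show z ∈ g ⁻¹' U from hz) (hU.preimage hg)
  rw [← PiNat.mem_cylinder_iff_eq.1 hzy] at hyU
  exact ⟨N, fun n hn => image_subset_iff.2 ((PiNat.cylinder_anti z hn).trans hyU)⟩

variable [TopologicalSpace α] [T2Space α] [MeasurableSpace α] [OpensMeasurableSpace α]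

/-- If every coordinate is relevant to at most one of the maps `g i`, then splitting a cylinder
along its next coordinate splits only one of the images, so inseparability passes to one of the
pieces and, in the limit, to a branch `z`. -/
lemma novikovSeparable_range {g : ι → (ℕ → ℕ) → α} (hg : ∀ i, Continuous (g i))
    (hcoord : ∀ n, ∃ k, ∀ i ≠ k, ∀ z m, g i (update z n m) = g i z)
    (hempty : ⋂ i, range (g i) = ∅) : NovikovSeparable fun i => range (g i) := by
  by_contra hns
  obtain ⟨z, hz⟩ : ∃ z, ∀ n, ¬ NovikovSeparable fun i => g i '' PiNat.cylinder z n := by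
    refine exists_forall_cylinder (P := fun s => ¬ NovikovSeparable fun i => g i '' s) (z₀ := 0)
      (by simpa using hns) fun z n => ?_
    contrapose!
    intro hsep
    obtain ⟨k, hk⟩ := hcoord n
    refine .of_subset_iUnion (k := k) ?_ ?_ hsep
    · rw [← image_iUnion]
      exact image_mono (PiNat.iUnion_cylinder_update z n).superset
    · rintro i hi m _ ⟨w, hw, rfl⟩
      refine ⟨update w n m, fun l hl => ?_, hk i hi w m⟩
      rcases eq_or_ne l n with rfl | hln
      · simp
      · simpa [hln] using hw l (by omega)
  obtain ⟨i, -⟩ := hcoord 0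
  obtain ⟨j, hj⟩ : ∃ j, g i z ∉ range (g j) := by
    simpa only [mem_iInter, not_forall] using eq_empty_iff_forall_notMem.1 hempty (g i z)
  have hij : g i z ≠ g j z := fun h => hj ⟨z, h.symm⟩
  obtain ⟨U, W, hU, hW, hiU, hjW, hUW⟩ := t2_separation hij
  obtain ⟨N, hN⟩ := exists_forall_ge_image_cylinder_subset (hg i) hU hiU
  obtain ⟨N', hN'⟩ := exists_forall_ge_image_cylinder_subset (hg j) hW hjW
  exact hz (max N N') (.of_disjoint (ne_of_apply_ne (g · z) hij) hU.measurableSet hW.measurableSet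
    hUW (hN _ (le_max_left ..)) (hN' _ (le_max_right ..)))

theorem novikovSeparable_of_analyticSet [Countable ι] {A : ι → Set α}
    (hA : ∀ i, AnalyticSet (A i)) (hempty : ⋂ i, A i = ∅) : NovikovSeparable A := by
  rcases isEmpty_or_nonempty ι with hι | hι
  · exact ⟨A, isEmptyElim, isEmptyElim, hempty⟩
  by_cases hA' : ∃ i, A i = ∅
  · exact hA'.elim fun _ => .of_eq_empty
  push Not at hA'
  have hparam : ∀ i, ∃ f : (ℕ → ℕ) → α, Continuous f ∧ range f = A i := fun i =>
    ((AnalyticSet_def (A i)).mp (hA i)).resolve_left (hA' i).ne_empty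
  choose f hf hfA using hparam
  obtain ⟨e, he⟩ := exists_injective_nat (ι × ℕ)
  -- The coordinates `e (i, l)`, for `l : ℕ`, are reserved for the parametrization of `A i`.
  let g : ι → (ℕ → ℕ) → α := fun i z => f i fun l => z (e (i, l))
  have hgA : ∀ i, range (g i) = A i := by
    intro i
    have hsurj : Surjective fun (z : ℕ → ℕ) l => z (e (i, l)) :=
      (he.comp (Prod.mk_right_injective i)).surjective_comp_right
    exact (hsurj.range_comp (f i)).trans (hfA i)
  have hcoord : ∀ n, ∃ k, ∀ i ≠ k, ∀ z m, g i (update z n m) = g i z := fun n =>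
    ⟨(invFun e n).1, fun i hi z m => congrArg (f i) <| funext fun l => update_of_ne
      (fun h => hi (by rw [← h, leftInverse_invFun he])) ..⟩
  have hg : ∀ i, Continuous (g i) := fun i => (hf i).comp (by fun_prop)
  have hgempty : ⋂ i, range (g i) = ∅ := by simpa only [hgA] using hempty
  simpa only [hgA] using novikovSeparable_range hg hcoord hgempty

end Novikov

/-! ### Borel sets with discrete sections -/

section DiscreteSections

variable {X Y : Type*} [MeasurableSpace X] [StandardBorelSpace X]

theorem exists_measurableSet_rightUnique_iUnion_eq [TopologicalSpace Y] [PolishSpace Y]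
    [MeasurableSpace Y] [BorelSpace Y] {E : SetRel X Y} (hE : MeasurableSet E)
    (hdisc : ∀ x, IsDiscrete {y | x ~[E] y}) :
    ∃ C : ℕ → SetRel X Y, (∀ n, MeasurableSet (C n)) ∧
      (∀ n, Relator.RightUnique (· ~[C n] ·)) ∧ ⋃ n, C n = E := by
  let := upgradeStandardBorel X
  obtain ⟨U, hU⟩ := exists_seq_basis Y
  -- `(x, y) ∈ E` lies outside `A n` iff `U n` isolates `y` in the section of `E` over `x`.
  let A : ℕ → SetRel X Y := fun n => {p ∈ E | ∃ z, p.1 ~[E] z ∧ ¬ (z ∈ U n ↔ z = p.2)}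
  have hA : ∀ n, AnalyticSet (A n) := by
    intro n
    have hUn : MeasurableSet (U n) := (hU.isOpen (mem_range_self n)).measurableSet
    have hmeas : MeasurableSet {q : (X × Y) × Y | q.1 ∈ E ∧
        q.1.1 ~[E] q.2 ∧ ¬ (q.2 ∈ U n ↔ q.2 = q.1.2)} :=
      (measurable_fst hE).inter <|
        ((measurable_fst.fst.prodMk measurable_snd) hE).inter <|
        ((measurable_snd hUn).iff (measurableSet_eq_fun measurable_snd measurable_fst.snd)).compl
    have himage : Prod.fst '' {q : (X × Y) × Y | q.1 ∈ E ∧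
        q.1.1 ~[E] q.2 ∧ ¬ (q.2 ∈ U n ↔ q.2 = q.1.2)} = A n := by
      ext p
      simp [A]
    exact himage ▸ hmeas.analyticSet_image measurable_fst
  have hAempty : ⋂ n, A n = ∅ := by
    refine eq_empty_of_forall_notMem fun ⟨x, y⟩ hxy => ?_
    rw [mem_iInter] at hxy
    obtain ⟨O, hO, hOy⟩ := isDiscrete_iff_forall_mem_exists_isOpen.1 (hdisc x) y (hxy 0).1
    obtain ⟨_, ⟨n, rfl⟩, hyU, hUO⟩ :=
      hU.exists_subset_of_mem_open (hOy.superset (mem_singleton y)).1 hO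
    obtain ⟨-, z, hxz, hz⟩ := hxy n
    exact hz ⟨fun hzU => hOy.subset ⟨hUO hzU, hxz⟩, fun hzy => hzy ▸ hyU⟩
  obtain ⟨D, hDmeas, hAD, hDempty⟩ := novikovSeparable_of_analyticSet hA hAempty
  have hisolated : ∀ n x y, (x, y) ∈ E \ D n → ∀ z, x ~[E] z → (z ∈ U n ↔ z = y) := by
    intro n x y hxy z hxz
    by_contra hz
    exact hxy.2 (hAD n ⟨hxy.1, z, hxz, hz⟩)
  refine ⟨fun n => E \ D n, fun n => hE.diff (hDmeas n), fun n x y z hxy hxz => ?_, ?_⟩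
  · exact (hisolated n x z hxz y hxy.1).1 ((hisolated n x y hxy y hxy.1).2 rfl)
  · rw [← sdiff_iInter, hDempty, sdiff_empty]

lemma measurableSet_dom_of_rightUnique [MeasurableSpace Y] [StandardBorelSpace Y] {R : SetRel X Y}
    (hR : MeasurableSet R) (hunique : Relator.RightUnique (· ~[R] ·)) : MeasurableSet R.dom := by
  have hinj : InjOn Prod.fst R := by
    rintro ⟨x, y⟩ hxy ⟨_, z⟩ hxz rfl
    rw [hunique hxy hxz]
  have hdom : Prod.fst '' R = R.dom := by
    ext x
    simp
  exact hdom ▸ hR.image_of_measurable_injOn measurable_fst hinj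

end DiscreteSections

/-! ### Matchings -/

section Matching

variable {V : Type*}

/-- A matching, encoded as the set of ordered pairs `(x, y)` such that `x` and `y` are matched to
each other. The edges are required to be disjoint only; no ambient graph is fixed, and an edge may
be a loop. -/
structure IsMatchingRel (M : SetRel V V) : Prop where
  isSymm : M.IsSymm
  rightUnique : Relator.RightUnique (· ~[M] ·)

lemma isMatchingRel_empty : IsMatchingRel (∅ : SetRel V V) :=
  ⟨inferInstance, fun _ _ _ h => h.elim⟩

lemma isMatchingRel_union_inv {F : SetRel V V} (hF : Relator.BiUnique (· ~[F] ·))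
    (hdisj : Disjoint F.dom F.cod) : IsMatchingRel (F ∪ F.inv) where
  isSymm := ⟨fun _ _ => Or.symm⟩
  rightUnique := by
    rintro x y z (hxy | hyx) (hxz | hzx)
    · exact hF.2 hxy hxz
    · exact (disjoint_left.1 hdisj ⟨y, hxy⟩ ⟨z, hzx⟩).elim
    · exact (disjoint_left.1 hdisj ⟨z, hxz⟩ ⟨y, hyx⟩).elim
    · exact hF.1 hyx hzx

lemma isMatchingRel_iUnion {ι : Type*} {M : ι → SetRel V V} (hM : ∀ i, IsMatchingRel (M i))
    (hdir : Directed (· ⊆ ·) M) : IsMatchingRel (⋃ i, M i) where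
  isSymm := ⟨fun x y hxy => by
    obtain ⟨i, hi⟩ := mem_iUnion.1 hxy
    exact mem_iUnion.2 ⟨i, (hM i).isSymm.symm _ _ hi⟩⟩
  rightUnique := fun x y z hxy hxz => by
    obtain ⟨i, hi⟩ := mem_iUnion.1 hxy
    obtain ⟨j, hj⟩ := mem_iUnion.1 hxz
    obtain ⟨k, hik, hjk⟩ := hdir i j
    exact (hM k).rightUnique (hik hi) (hjk hj)

theorem exists_iUnion_isMatchingRel_eq [MeasurableSpace V] [MeasurableSpace.CountablySeparated V]
    {ι : Type*} {E : SetRel V V} [E.IsSymm] (hirrefl : ∀ x, (x, x) ∉ E) {C : ι → SetRel V V}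
    (hCmeas : ∀ i, MeasurableSet (C i)) (hC : ∀ i, Relator.RightUnique (· ~[C i] ·))
    (hCE : ⋃ i, C i = E) :
    ∃ B : ι × ι × ℕ → SetRel V V, (∀ i, MeasurableSet (B i)) ∧ (∀ i, IsMatchingRel (B i)) ∧
      ⋃ i, B i = E := by
  obtain ⟨U, hUmeas, hU⟩ := exists_seq_separating V MeasurableSet.univ univ
  let F : ι × ι × ℕ → SetRel V V := fun ⟨i, j, n⟩ => C i ∩ (C j).inv ∩ U n ×ˢ (U n)ᶜ
  have hFmeas : ∀ i, MeasurableSet (F i) := fun ⟨i, j, n⟩ =>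
    ((hCmeas i).inter (measurable_swap (hCmeas j))).inter ((hUmeas n).prod (hUmeas n).compl)
  have hFbi : ∀ i, Relator.BiUnique (· ~[F i] ·) := fun ⟨i, j, _⟩ =>
    ⟨fun _ _ _ h h' => hC j h.1.2 h'.1.2, fun _ _ _ h h' => hC i h.1.1 h'.1.1⟩
  have hFdisj : ∀ i, Disjoint (F i).dom (F i).cod := fun _ =>
    disjoint_left.2 fun _ ⟨_, h⟩ ⟨_, h'⟩ => h'.2.2 h.2.1
  have hFE : ∀ i, F i ⊆ E := fun ⟨i, _, _⟩ p hp => hCE ▸ mem_iUnion_of_mem i hp.1.1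
  have hcover : ∀ x y n, x ~[E] y → x ∈ U n → y ∉ U n → ∃ i, x ~[F i] y := by
    intro x y n hxy hx hy
    obtain ⟨i, hi⟩ := mem_iUnion.1 (hCE ▸ hxy)
    obtain ⟨j, hj⟩ := mem_iUnion.1 (hCE ▸ E.symm hxy)
    exact ⟨(i, j, n), ⟨hi, hj⟩, hx, hy⟩
  refine ⟨fun i => F i ∪ (F i).inv, fun i => (hFmeas i).union (measurable_swap (hFmeas i)),
    fun i => isMatchingRel_union_inv (hFbi i) (hFdisj i), Subset.antisymm ?_ ?_⟩
  · exact iUnion_subset fun i => union_subset (hFE i) fun p hp => E.symm (hFE i hp)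
  · rintro ⟨x, y⟩ hxy
    have hne : x ≠ y := fun h => hirrefl x (h ▸ hxy)
    obtain ⟨n, hn⟩ : ∃ n, ¬ (x ∈ U n ↔ y ∈ U n) := by
      contrapose! hne
      exact hU x trivial y trivial hne
    rw [mem_iUnion]
    by_cases hx : x ∈ U n
    · have hy : y ∉ U n := fun hy => hn (iff_of_true hx hy)
      exact (hcover x y n hxy hx hy).imp fun _ => Or.inl
    · have hy : y ∈ U n := by_contra fun hy => hn (iff_of_false hx hy)
      exact (hcover y x n (E.symm hxy) hy hx).imp fun _ => Or.inr

/-- The matching `M` together with the edges of `B` that meet no edge of `M`: one step of the greedy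
construction of a maximal matching. -/
def greedyExtend (M B : SetRel V V) : SetRel V V :=
  M ∪ B ∩ M.domᶜ ×ˢ M.domᶜ

lemma IsMatchingRel.greedyExtend {M B : SetRel V V} (hM : IsMatchingRel M) (hB : IsMatchingRel B) :
    IsMatchingRel (greedyExtend M B) where
  isSymm := ⟨by
    rintro x y (hxy | ⟨hxy, hx, hy⟩)
    · exact .inl (hM.isSymm.symm _ _ hxy)
    · exact .inr ⟨hB.isSymm.symm _ _ hxy, hy, hx⟩⟩
  rightUnique := by
    rintro x y z (hxy | ⟨hxy, hx, -⟩) (hxz | ⟨hxz, hx', -⟩)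
    · exact hM.rightUnique hxy hxz
    · exact (hx' ⟨y, hxy⟩).elim
    · exact (hx ⟨z, hxz⟩).elim
    · exact hB.rightUnique hxy hxz

lemma mem_dom_greedyExtend {M B : SetRel V V} {x y : V} (hxy : x ~[B] y) :
    x ∈ (greedyExtend M B).dom ∨ y ∈ (greedyExtend M B).dom := by
  have hdom : M.dom ⊆ (greedyExtend M B).dom := SetRel.dom_mono subset_union_left
  by_cases hx : x ∈ M.dom
  · exact .inl (hdom hx)
  by_cases hy : y ∈ M.dom
  · exact .inr (hdom hy)
  exact .inl ⟨y, .inr ⟨hxy, hx, hy⟩⟩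

/-- The greedy matching that goes through the relations `B 0, B 1, …`, after `n` steps. -/
def greedyMatching (B : ℕ → SetRel V V) : ℕ → SetRel V V
  | 0 => ∅
  | n + 1 => greedyExtend (greedyMatching B n) (B n)

lemma isMatchingRel_greedyMatching {B : ℕ → SetRel V V} (hB : ∀ n, IsMatchingRel (B n)) :
    ∀ n, IsMatchingRel (greedyMatching B n)
  | 0 => isMatchingRel_empty
  | n + 1 => (isMatchingRel_greedyMatching hB n).greedyExtend (hB n)

lemma monotone_greedyMatching (B : ℕ → SetRel V V) : Monotone (greedyMatching B) :=
  monotone_nat_of_le_succ fun _ => subset_union_left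

lemma greedyMatching_subset_iUnion (B : ℕ → SetRel V V) : ∀ n, greedyMatching B n ⊆ ⋃ i, B i
  | 0 => empty_subset _
  | n + 1 => union_subset (greedyMatching_subset_iUnion B n)
      (inter_subset_left.trans (subset_iUnion B n))

variable [MeasurableSpace V] [StandardBorelSpace V]

lemma measurableSet_greedyMatching {B : ℕ → SetRel V V} (hBmeas : ∀ n, MeasurableSet (B n))
    (hB : ∀ n, IsMatchingRel (B n)) : ∀ n, MeasurableSet (greedyMatching B n)
  | 0 => .empty
  | n + 1 => by
    have ih := measurableSet_greedyMatching hBmeas hB n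
    have hdom : MeasurableSet (greedyMatching B n).dom :=
      measurableSet_dom_of_rightUnique ih (isMatchingRel_greedyMatching hB n).rightUnique
    exact ih.union ((hBmeas n).inter (hdom.compl.prod hdom.compl))

theorem exists_maximal_isMatchingRel_subset_iUnion {ι : Type*} [Countable ι] {B : ι → SetRel V V}
    (hBmeas : ∀ i, MeasurableSet (B i)) (hB : ∀ i, IsMatchingRel (B i)) :
    ∃ M : SetRel V V, MeasurableSet M ∧ IsMatchingRel M ∧ M ⊆ ⋃ i, B i ∧
      ∀ x y, (x, y) ∈ ⋃ i, B i → x ∈ M.dom ∨ y ∈ M.dom := by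
  rcases isEmpty_or_nonempty ι with hι | hι
  · exact ⟨∅, .empty, isMatchingRel_empty, empty_subset _, by simp⟩
  obtain ⟨f, hf⟩ := exists_surjective_nat ι
  let M : SetRel V V := ⋃ n, greedyMatching (B ∘ f) n
  have hMmeas : MeasurableSet M := .iUnion <|
    measurableSet_greedyMatching (fun n => hBmeas (f n)) fun n => hB (f n)
  have hM : IsMatchingRel M := isMatchingRel_iUnion
    (isMatchingRel_greedyMatching fun n => hB (f n)) (monotone_greedyMatching _).directed_le
  have hMB : M ⊆ ⋃ i, B i :=
    hf.iUnion_comp B ▸ iUnion_subset (greedyMatching_subset_iUnion (B ∘ f))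
  refine ⟨M, hMmeas, hM, hMB, fun x y hxy => ?_⟩
  obtain ⟨n, hn⟩ : ∃ n, x ~[B (f n)] y := mem_iUnion.1 (hf.iUnion_comp B ▸ hxy)
  have hdom : (greedyMatching (B ∘ f) (n + 1)).dom ⊆ M.dom :=
    SetRel.dom_mono (subset_iUnion (greedyMatching (B ∘ f)) (n + 1))
  exact (mem_dom_greedyExtend hn).imp (@hdom x) (@hdom y)

end Matching

theorem stmt_14_general {V : Type*} [TopologicalSpace V] [PolishSpace V] [MeasurableSpace V]
    [BorelSpace V] (G : SimpleGraph V) (hdisc : ∀ x : V, IsDiscrete (G.neighborSet x))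
    (hE : MeasurableSet {p : V × V | G.Adj p.1 p.2}) :
    ∃ M : Set (V × V),
      MeasurableSet M ∧
      M ⊆ {p : V × V | G.Adj p.1 p.2} ∧
      (∀ p ∈ M, (p.2, p.1) ∈ M) ∧
      (∀ x y z : V, (x, y) ∈ M → (x, z) ∈ M → y = z) ∧
      (∀ x y : V, G.Adj x y → (∃ z, (x, z) ∈ M) ∨ (∃ z, (y, z) ∈ M)) := by
  let E : SetRel V V := {p | G.Adj p.1 p.2}
  have : E.IsSymm := ⟨fun _ _ => G.adj_symm⟩
  obtain ⟨C, hCmeas, hC, hCE⟩ := exists_measurableSet_rightUnique_iUnion_eq hE hdisc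
  obtain ⟨B, hBmeas, hB, hBE⟩ :=
    exists_iUnion_isMatchingRel_eq (E := E) (fun x => G.loopless.irrefl x) hCmeas hC hCE
  obtain ⟨M, hMmeas, hM, hME, hmax⟩ := exists_maximal_isMatchingRel_subset_iUnion hBmeas hB
  rw [hBE] at hME hmax
  exact ⟨M, hMmeas, hME, fun p => hM.isSymm.symm p.1 p.2, fun _ _ _ hy hz => hM.rightUnique hy hz,
    hmax⟩

/-- Every locally finite Borel graph has a maximal matching `M ⊆ E` which is a Borel
subset of `V²`. -/
theorem stmt_14 {V : Type*} [MeasurableSpace V] [StandardBorelSpace V]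
    (G : SimpleGraph V) (hlf : ∀ x : V, (G.neighborSet x).Finite)
    (hE : MeasurableSet {p : V × V | G.Adj p.1 p.2}) :
    ∃ M : Set (V × V),
      MeasurableSet M ∧
      M ⊆ {p : V × V | G.Adj p.1 p.2} ∧
      (∀ p ∈ M, (p.2, p.1) ∈ M) ∧
      (∀ x y z : V, (x, y) ∈ M → (x, z) ∈ M → y = z) ∧
      (∀ x y : V, G.Adj x y → (∃ z, (x, z) ∈ M) ∨ (∃ z, (y, z) ∈ M)) := by
  let := upgradeStandardBorel V
  exact stmt_14_general G (fun x => (hlf x).isDiscrete) hE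
end
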